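/- arXiv:1402.0299 — 2 statements merged into one kernel-verified Lean document; each statement's English description precedes it below -/
import Mathlib

section
/- The partially ordered set (L, ⊑) is a complete lattice: ⊥ is the ⊑-least element of L, and every nonempty subset X ⊆ L has a least upper bound in L with respect to ⊑. -/
/-- `x =_α y` : the equivalence determined by the preorder `⊑_α`. -/
def eqa {L : Type*} (sq : Ordinal → L → L → Prop) (α : Ordinal) (x y : L) : Prop :=
  sq α x y ∧ sq α y x

/-- `x ⊏_α y` : `x ⊑_α y` but not `x =_α y`. -/
def sqlt {L : Type*} (sq : Ordinal → L → L → Prop) (α : Ordinal) (x y : L) : Prop :=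
  sq α x y ∧ ¬ eqa sq α x y

/-- `x ⊑ y` : `x ⊏_α y` for some `α < κ`, or `x = y`. -/
def sqle {L : Type*} (sq : Ordinal → L → L → Prop) (κ : Ordinal) (x y : L) : Prop :=
  (∃ α < κ, sqlt sq α x y) ∨ x = y

/-- `(x]_α = {y | ∀ β < α, x =_β y}`. -/
def seg {L : Type*} (sq : Ordinal → L → L → Prop) (α : Ordinal) (x : L) : Set L :=
  {y | ∀ β < α, eqa sq β x y}

/-- `[x]_α = {y | x =_α y ∧ ∀ β < α, x =_β y}`. -/
def segcl {L : Type*} (sq : Ordinal → L → L → Prop) (α : Ordinal) (x : L) : Set L :=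
  {y | eqa sq α x y ∧ ∀ β < α, eqa sq β x y}

/-- `y = ⨆_α X` (for `X ⊆ (x]_α`): the element specified by Axiom 3. -/
def IsLubA {L : Type*} [LE L] (sq : Ordinal → L → L → Prop) (α : Ordinal) (x : L)
    (X : Set L) (y : L) : Prop :=
  y ∈ seg sq α x ∧ (∀ z ∈ X, sq α z y) ∧
    ∀ w ∈ seg sq α x, (∀ z ∈ X, sq α z w) → sq α y w ∧ y ≤ w

/-!
A first-difference argument turns `x ⊑ y` into a statement about single levels: `x ⊑_α y` for each
`α < κ` such that `x` and `y` are equivalent at all levels below `α`. A least upper bound of `X` is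
therefore an element `s` which, at every level `α`, is a `⊑_α`-least upper bound of those members
of `X` that agree with `s` below `α`. Axiom 3 produces such an element one level at a time. At each
level the result is unique up to `=_α`, so the choices form a coherent sequence. Axiom 4 glues a
coherent sequence together, after each term has been replaced by the `≤`-least element of its
`=_α`-class, which makes the sequence `≤`-increasing.
-/

open Set

universe u

theorem directedOn_image_of_monotoneOn {ι L : Type*} [LinearOrder ι] [Preorder L] {f : ι → L}
    {s : Set ι} (hf : MonotoneOn f s) : DirectedOn (· ≤ ·) (f '' s) :=
  directedOn_image.2 <| (DirectedOn.of_linearOrder s).mono' fun _ hi _ hj hij ↦ hf hi hj hij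

theorem sSup_image_Ico_eq_sSup_image_Iio {ι L : Type*} [LinearOrder ι] [CompletePartialOrder L]
    {f : ι → L} {a b : ι} (hf : MonotoneOn f (Iio b)) (hab : a < b) :
    sSup (f '' Ico a b) = sSup (f '' Iio b) := by
  have isLUB_Iio := (directedOn_image_of_monotoneOn hf).isLUB_sSup
  have isLUB_Ico : IsLUB (f '' Ico a b) (sSup (f '' Ico a b)) :=
    (directedOn_image_of_monotoneOn (hf.mono Ico_subset_Iio_self)).isLUB_sSup
  have cofinal : IsCofinalFor (f '' Iio b) (f '' Ico a b) := by
    rintro _ ⟨i, hi, rfl⟩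
    exact ⟨f (max i a), mem_image_of_mem f ⟨le_max_right i a, max_lt hi hab⟩,
      hf hi (max_lt hi hab) (le_max_left i a)⟩
  exact isLUB_Ico.unique (isLUB_Iio.of_isCofinalFor (image_mono Ico_subset_Iio_self) cofinal)

theorem eqa.symm {L : Type*} {sq : Ordinal → L → L → Prop} {α : Ordinal} {x y : L}
    (h : eqa sq α x y) : eqa sq α y x :=
  And.symm h

theorem mem_seg_comm {L : Type*} {sq : Ordinal → L → L → Prop} {α : Ordinal} {x y : L} :
    x ∈ seg sq α y ↔ y ∈ seg sq α x :=
  ⟨fun h β hβ ↦ (h β hβ).symm, fun h β hβ ↦ (h β hβ).symm⟩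

/-- A family of preorders `⊑_α`, `α < κ`, each refining the equivalences of all earlier ones
(Axiom 1) and jointly separating points (Axiom 2). Nothing is required of `sq α` for `κ ≤ α`. -/
structure IsStratification {L : Type*} (sq : Ordinal.{u} → L → L → Prop) (κ : Ordinal.{u}) :
    Prop where
  refl : ∀ α < κ, ∀ x : L, sq α x x
  trans : ∀ α < κ, ∀ x y z : L, sq α x y → sq α y z → sq α x z
  eqa_of_lt : ∀ α β : Ordinal, α < β → β < κ → ∀ x y : L, sq β x y → eqa sq α x y
  eq_of_forall_eqa : ∀ x y : L, (∀ α < κ, eqa sq α x y) → x = y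

/-- A stratification of a directed-complete order that satisfies Axiom 3, and Axiom 4 for directed
sets. -/
structure IsStratifiedOrder {L : Type*} [CompletePartialOrder L]
    (sq : Ordinal.{u} → L → L → Prop) (κ : Ordinal.{u}) : Prop extends IsStratification sq κ where
  exists_isLubA : ∀ x : L, ∀ α < κ, ∀ X ⊆ seg sq α x, ∃ y : L, IsLubA sq α x X y
  eqa_sSup : ∀ X : Set L, X.Nonempty → DirectedOn (· ≤ ·) X → ∀ α < κ, ∀ y : L,
    (∀ x ∈ X, eqa sq α y x) → eqa sq α y (sSup X)

/-- `u` is, at level `α`, a least upper bound of those members of `X` that agree with `u` below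
`α`. Unlike `IsLubA`, this does not mention the order of `L`, so it is invariant under `=_α`. -/
structure IsStageLub {L : Type*} (sq : Ordinal → L → L → Prop) (X : Set L) (α : Ordinal) (u : L) :
    Prop where
  upper : ∀ x ∈ X ∩ seg sq α u, sq α x u
  least : ∀ w ∈ seg sq α u, (∀ x ∈ X ∩ seg sq α u, sq α x w) → sq α u w

namespace IsStratification

variable {L : Type*} {sq : Ordinal.{u} → L → L → Prop} {κ α β : Ordinal.{u}} {x y z u v : L}
  {X : Set L}

theorem eqa_refl (h : IsStratification sq κ) (hα : α < κ) (x : L) : eqa sq α x x :=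
  ⟨h.refl α hα x, h.refl α hα x⟩

theorem eqa_trans (h : IsStratification sq κ) (hα : α < κ) (hxy : eqa sq α x y)
    (hyz : eqa sq α y z) : eqa sq α x z :=
  ⟨h.trans α hα x y z hxy.1 hyz.1, h.trans α hα z y x hyz.2 hxy.2⟩

theorem eqa_of_le (h : IsStratification sq κ) (hαβ : α ≤ β) (hβ : β < κ) (hxy : eqa sq β x y) :
    eqa sq α x y := by
  rcases hαβ.eq_or_lt with rfl | hlt
  · exact hxy
  · exact h.eqa_of_lt α β hlt hβ x y hxy.1

theorem mem_seg_self (h : IsStratification sq κ) (hα : α < κ) (x : L) : x ∈ seg sq α x :=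
  fun _ hβ ↦ h.eqa_refl (hβ.trans hα) x

theorem mem_seg_of_eqa (h : IsStratification sq κ) (hα : α < κ) (hxy : eqa sq α x y) :
    y ∈ seg sq α x :=
  fun _ hβ ↦ h.eqa_of_le hβ.le hα hxy

theorem mem_seg_trans (h : IsStratification sq κ) (hα : α < κ) (hy : y ∈ seg sq α x)
    (hz : z ∈ seg sq α y) : z ∈ seg sq α x :=
  fun β hβ ↦ h.eqa_trans (hβ.trans hα) (hy β hβ) (hz β hβ)

theorem seg_eq_of_mem (h : IsStratification sq κ) (hα : α < κ) (hy : y ∈ seg sq α x) :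
    seg sq α x = seg sq α y :=
  Subset.antisymm (fun _ ↦ h.mem_seg_trans hα (mem_seg_comm.1 hy)) fun _ ↦ h.mem_seg_trans hα hy

theorem sqle_iff (h : IsStratification sq κ) :
    sqle sq κ x y ↔ ∀ α < κ, y ∈ seg sq α x → sq α x y := by
  constructor
  · rintro (⟨β, hβ, hlt⟩ | rfl) α hα hy
    · rcases lt_trichotomy β α with hβα | rfl | hαβ
      · exact absurd (hy β hβα) hlt.2
      · exact hlt.1
      · exact (h.eqa_of_lt α β hαβ hβ x y hlt.1).1
    · exact h.refl α hα x
  · intro hxy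
    by_contra hnot
    obtain ⟨hnlt, hne⟩ := not_or.1 hnot
    have eqa_all (α : Ordinal.{u}) : α < κ → eqa sq α x y := by
      induction α using WellFoundedLT.induction with
      | ind α ih =>
        intro hα
        by_contra hneq
        exact hnlt ⟨α, hα, hxy α hα fun β hβ ↦ ih β hβ (hβ.trans hα), hneq⟩
    exact hne (h.eq_of_forall_eqa x y eqa_all)

theorem isStageLub_of_eqa (h : IsStratification sq κ) (hα : α < κ) (huv : eqa sq α u v)
    (hu : IsStageLub sq X α u) : IsStageLub sq X α v := by
  have hseg := h.seg_eq_of_mem hα (h.mem_seg_of_eqa hα huv)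
  constructor <;> rw [← hseg]
  · exact fun x hx ↦ h.trans α hα x u v (hu.upper x hx) huv.1
  · exact fun w hw hXw ↦ h.trans α hα v u w huv.2 (hu.least w hw hXw)

theorem eqa_of_isStageLub_of_mem_seg (h : IsStratification sq κ) (hα : α < κ)
    (hv : v ∈ seg sq α u) (hu : IsStageLub sq X α u) (hv' : IsStageLub sq X α v) :
    eqa sq α u v := by
  have hseg := h.seg_eq_of_mem hα hv
  exact ⟨hu.least v hv (hseg ▸ hv'.upper), hv'.least u (mem_seg_comm.1 hv) (hseg ▸ hu.upper)⟩

theorem eqa_of_forall_isStageLub (h : IsStratification sq κ) (hα : α < κ)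
    (hu : ∀ β ≤ α, IsStageLub sq X β u) (hv : ∀ β ≤ α, IsStageLub sq X β v) :
    eqa sq α u v := by
  induction α using WellFoundedLT.induction with
  | ind α ih =>
    refine h.eqa_of_isStageLub_of_mem_seg hα (fun β hβ ↦ ?_) (hu α le_rfl) (hv α le_rfl)
    exact ih β hβ (hβ.trans hα) (fun γ hγ ↦ hu γ (hγ.trans hβ.le))
      fun γ hγ ↦ hv γ (hγ.trans hβ.le)

theorem sqle_of_mem_of_forall_isStageLub (h : IsStratification sq κ)
    (hu : ∀ α < κ, IsStageLub sq X α u) (hx : x ∈ X) : sqle sq κ x u :=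
  h.sqle_iff.2 fun α hα hxu ↦ (hu α hα).upper x ⟨hx, mem_seg_comm.1 hxu⟩

theorem sqle_of_forall_isStageLub_of_forall_sqle (h : IsStratification sq κ)
    (hu : ∀ α < κ, IsStageLub sq X α u) (hz : ∀ x ∈ X, sqle sq κ x z) : sqle sq κ u z := by
  refine h.sqle_iff.2 fun α hα hzu ↦ (hu α hα).least z hzu ?_
  rintro x ⟨hxX, hxu⟩
  exact h.sqle_iff.1 (hz x hxX) α hα (h.mem_seg_trans hα (mem_seg_comm.1 hxu) hzu)

end IsStratification

namespace IsStratifiedOrder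

variable {L : Type*} [CompletePartialOrder L] {sq : Ordinal.{u} → L → L → Prop}
  {κ α β : Ordinal.{u}}

theorem bot_sqle (h : IsStratifiedOrder sq κ) (x : L) : sqle sq κ ⊥ x := by
  refine h.sqle_iff.2 fun α hα hx ↦ ?_
  obtain ⟨y, -, -, hy⟩ := h.exists_isLubA ⊥ α hα ∅ (empty_subset _)
  have y_eq_bot : y = ⊥ := le_bot_iff.1 (hy ⊥ (h.mem_seg_self hα ⊥) (by simp)).2
  exact y_eq_bot ▸ (hy x hx (by simp)).1

theorem exists_isLeast_eqa (h : IsStratifiedOrder sq κ) (hα : α < κ) (x : L) :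
    ∃ y, IsLeast {w | eqa sq α x w} y := by
  have hx := h.mem_seg_self hα x
  obtain ⟨y, -, hxy, hy⟩ := h.exists_isLubA x α hα {x} (singleton_subset_iff.2 hx)
  refine ⟨y, ⟨hxy x rfl, (hy x hx ?_).1⟩, fun w hw ↦ (hy w (h.mem_seg_of_eqa hα hw) ?_).2⟩
  · exact forall_eq.2 (h.refl α hα x)
  · exact forall_eq.2 hw.1

theorem eqa_sSup_image_Iio (h : IsStratifiedOrder sq κ) (hα : α ≤ κ) {y : Ordinal.{u} → L}
    (hmono : MonotoneOn y (Iio α)) (hy : ∀ β γ, β < γ → γ < α → eqa sq β (y β) (y γ))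
    (hβ : β < α) : eqa sq β (y β) (sSup (y '' Iio α)) := by
  have hβκ := hβ.trans_le hα
  rw [← sSup_image_Ico_eq_sSup_image_Iio hmono hβ]
  have directed : DirectedOn (· ≤ ·) (y '' Ico β α) :=
    directedOn_image_of_monotoneOn (hmono.mono Ico_subset_Iio_self)
  refine h.eqa_sSup _ ((nonempty_Ico.2 hβ).image y) directed β hβκ (y β) ?_
  rintro _ ⟨γ, ⟨hβγ, hγ⟩, rfl⟩
  rcases hβγ.eq_or_lt with rfl | hlt
  · exact h.eqa_refl hβκ (y β)
  · exact hy β γ hlt hγ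

theorem exists_forall_eqa (h : IsStratifiedOrder sq κ) (hα : α ≤ κ)
    {x : Ordinal.{u} → L} (hx : ∀ β γ, β < γ → γ < α → eqa sq β (x β) (x γ)) :
    ∃ u, ∀ β < α, eqa sq β (x β) u := by
  have exists_min (β : Ordinal.{u}) (hβ : β < α) : ∃ y, IsLeast {w | eqa sq β (x β) w} y :=
    h.exists_isLeast_eqa (hβ.trans_le hα) (x β)
  choose! y hy using exists_min
  have x_eqa_y {β γ : Ordinal.{u}} (hβγ : β < γ) (hγ : γ < α) : eqa sq β (x β) (y γ) :=
    h.eqa_trans ((hβγ.trans hγ).trans_le hα) (hx β γ hβγ hγ)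
      (h.eqa_of_le hβγ.le (hγ.trans_le hα) (hy γ hγ).1)
  have monotone : MonotoneOn y (Iio α) := by
    intro β hβ γ hγ hβγ
    rcases hβγ.eq_or_lt with rfl | hlt
    · exact le_rfl
    · exact (hy β hβ).2 (x_eqa_y hlt hγ)
  have coherent (β γ : Ordinal.{u}) (hβγ : β < γ) (hγ : γ < α) : eqa sq β (y β) (y γ) :=
    have hβ := hβγ.trans hγ
    h.eqa_trans (hβ.trans_le hα) (hy β hβ).1.symm (x_eqa_y hβγ hγ)
  exact ⟨sSup (y '' Iio α), fun β hβ ↦ h.eqa_trans (hβ.trans_le hα) (hy β hβ).1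
    (h.eqa_sSup_image_Iio hα monotone coherent hβ)⟩

theorem exists_mem_seg_isStageLub (h : IsStratifiedOrder sq κ) (hα : α < κ) (X : Set L) (u : L) :
    ∃ v ∈ seg sq α u, IsStageLub sq X α v := by
  obtain ⟨v, hv, upper, least⟩ := h.exists_isLubA u α hα (X ∩ seg sq α u) inter_subset_right
  refine ⟨v, hv, ?_⟩
  constructor <;> rw [← h.seg_eq_of_mem hα hv]
  · exact upper
  · exact fun w hw hXw ↦ (least w hw hXw).1

theorem exists_forall_isStageLub (h : IsStratifiedOrder sq κ) (X : Set L) (hα : α ≤ κ) :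
    ∃ u, ∀ β < α, IsStageLub sq X β u := by
  induction α using WellFoundedLT.induction with
  | ind α ih =>
    have exists_through (β : Ordinal.{u}) (hβ : β < α) : ∃ v, ∀ γ ≤ β, IsStageLub sq X γ v := by
      have hβκ := hβ.trans_le hα
      obtain ⟨u, hu⟩ := ih β hβ hβκ.le
      obtain ⟨v, huv, hv⟩ := h.exists_mem_seg_isStageLub hβκ X u
      refine ⟨v, fun γ hγ ↦ ?_⟩
      rcases hγ.eq_or_lt with rfl | hlt
      · exact hv
      · exact h.isStageLub_of_eqa (hlt.trans hβκ) (huv γ hlt) (hu γ hlt)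
    choose! x hx using exists_through
    have coherent (β γ : Ordinal.{u}) (hβγ : β < γ) (hγ : γ < α) : eqa sq β (x β) (x γ) :=
      have hβ := hβγ.trans hγ
      h.eqa_of_forall_isStageLub (hβ.trans_le hα) (hx β hβ)
        fun δ hδ ↦ hx γ hγ δ (hδ.trans hβγ.le)
    obtain ⟨u, hu⟩ := h.exists_forall_eqa hα coherent
    exact ⟨u, fun β hβ ↦ h.isStageLub_of_eqa (hβ.trans_le hα) (hu β hβ) (hx β hβ β le_rfl)⟩

end IsStratifiedOrder

theorem stmt_16_general {L : Type*} [CompletePartialOrder L] {κ : Ordinal.{u}}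
    {sq : Ordinal.{u} → L → L → Prop} (h : IsStratifiedOrder sq κ) :
    (∀ x : L, sqle sq κ ⊥ x) ∧
      ∀ X : Set L, ∃ s : L, (∀ x ∈ X, sqle sq κ x s) ∧
        ∀ z : L, (∀ x ∈ X, sqle sq κ x z) → sqle sq κ s z := by
  refine ⟨h.bot_sqle, fun X ↦ ?_⟩
  obtain ⟨s, hs⟩ := h.exists_forall_isStageLub X le_rfl
  exact ⟨s, fun _ hx ↦ h.sqle_of_mem_of_forall_isStageLub hs hx,
    fun _ hz ↦ h.sqle_of_forall_isStageLub_of_forall_sqle hs hz⟩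

theorem stmt_16
    {L : Type*} [CompleteLattice L] {κ : Ordinal} (hκ : Order.IsSuccLimit κ)
    (sq : Ordinal → L → L → Prop)
    (hrefl : ∀ α < κ, ∀ x : L, sq α x x)
    (htrans : ∀ α < κ, ∀ x y z : L, sq α x y → sq α y z → sq α x z)
    (ax1 : ∀ α β : Ordinal, α < β → β < κ → ∀ x y : L, sq β x y → eqa sq α x y)
    (ax2 : ∀ x y : L, (∀ α < κ, eqa sq α x y) → x = y)
    (ax3 : ∀ x : L, ∀ α < κ, ∀ X ⊆ seg sq α x, ∃ y : L, IsLubA sq α x X y)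
    (ax4 : ∀ X : Set L, X.Nonempty → ∀ α < κ, ∀ y : L,
      (∀ x ∈ X, eqa sq α y x) → eqa sq α y (sSup X)) :
    (∀ x : L, sqle sq κ ⊥ x) ∧
      ∀ X : Set L, X.Nonempty →
        ∃ s : L, (∀ x ∈ X, sqle sq κ x s) ∧
          ∀ z : L, (∀ x ∈ X, sqle sq κ x z) → sqle sq κ s z := by
  have h : IsStratifiedOrder sq κ :=
    ⟨⟨hrefl, htrans, ax1, ax2⟩, ax3, fun X hX _ ↦ ax4 X hX⟩
  exact ⟨(stmt_16_general h).1, fun X _ ↦ (stmt_16_general h).2 X⟩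
end

section
/- Suppose f : L → L is α-monotonic for some α with α+1 < κ. If x ∈ L and x ⊑_α f(x), then there is some y ∈ L with the following properties: (i) x ⊑_α y and y =_α f(y); (ii) for all z ∈ L, if x ⊑_α z and f(z) ⊑_α z, then y ⊑_α z; (iii) y is the ≤-least element of [y]_α, y ⊑_{α+1} w for all w ∈ [y]_α, and y ⊑_{α+1} f(y). -/
/-! The proof is the Knaster–Tarski argument relative to `⊑_α`: `y` is the `⊑_α`-infimum of the
pre-fixed points of `f` above `x`. Axiom 3 supplies it as the `⨆_α` of the lower bounds of these
points in `(x]_α`, and any `⨆_α` is `≤`-least in its own class `[y]_α`. Since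
`[y]_α = (y]_{α+1}`, and `⨆_{α+1} ∅` is the `≤`-least element of that set and also `⊑_{α+1}`-below
all of it, `y` equals `⨆_{α+1} ∅`. -/

section KnasterTarski

variable {L : Type*} {r : L → L → Prop} {f : L → L} {x y : L}

/-- The pre-fixed points of `f` that lie above `x`, both with respect to the relation `r`; a least
such point is the one required by (i) and (ii). -/
def prefixedAbove (r : L → L → Prop) (f : L → L) (x : L) : Set L :=
  {z | r x z ∧ r (f z) z}

theorem antisymmRel_map_of_greatest_lowerBound_prefixedAbove [IsTrans L r]
    (hf : ∀ a b, r a b → r (f a) (f b)) (hx : r x (f x)) (hxy : r x y)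
    (hlower : ∀ z ∈ prefixedAbove r f x, r y z)
    (hgreatest : ∀ w, r x w → (∀ z ∈ prefixedAbove r f x, r w z) → r w y) :
    AntisymmRel r y (f y) := by
  have hx_fy : r x (f y) := trans_of r hx (hf x y hxy)
  have hfy_y : r (f y) y :=
    hgreatest (f y) hx_fy fun z hz => trans_of r (hf y z (hlower z hz)) hz.2
  exact ⟨hlower (f y) ⟨hx_fy, hf (f y) y hfy_y⟩, hfy_y⟩

end KnasterTarski

section Stratification

variable {L : Type*} {sq : Ordinal → L → L → Prop} {α : Ordinal} {x y z u w : L} {X Z : Set L}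

theorem eqa.trans [IsTrans L (sq α)] (hxy : eqa sq α x y) (hyz : eqa sq α y z) : eqa sq α x z :=
  AntisymmRel.trans hxy hyz

theorem seg_add_one (sq : Ordinal → L → L → Prop) (α : Ordinal) (x : L) :
    seg sq (α + 1) x = segcl sq α x := by
  ext y
  simp only [seg, segcl, Set.mem_ofPred_eq, Order.lt_add_one_iff, le_iff_eq_or_lt, or_imp,
    forall_and, forall_eq]

theorem mem_seg_trans (htrans : ∀ β < α, IsTrans L (sq β)) (hy : y ∈ seg sq α x)
    (hz : z ∈ seg sq α y) : z ∈ seg sq α x := fun β hβ =>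
  have := htrans β hβ
  (hy β hβ).trans (hz β hβ)

/-- The lower bounds of `Z` with respect to `⊑_α` inside `(x]_α`; as Axiom 3 only provides suprema,
infima are obtained as suprema of such sets. -/
def lowerBoundsA (sq : Ordinal → L → L → Prop) (α : Ordinal) (x : L) (Z : Set L) : Set L :=
  {w ∈ seg sq α x | ∀ z ∈ Z, sq α w z}

theorem IsLubA.mem_lowerBoundsA [LE L] (hy : IsLubA sq α x (lowerBoundsA sq α x Z) y)
    (hZ : Z ⊆ seg sq α x) : y ∈ lowerBoundsA sq α x Z :=
  ⟨hy.1, fun z hz => (hy.2.2 z (hZ hz) fun _ hw => hw.2 z hz).1⟩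

theorem IsLubA.le_of_mem_segcl [LE L] (htrans : ∀ β ≤ α, IsTrans L (sq β))
    (hy : IsLubA sq α x X y) (hw : w ∈ segcl sq α y) : y ≤ w := by
  have hw_seg : w ∈ seg sq α x := mem_seg_trans (fun β hβ => htrans β hβ.le) hy.1 hw.2
  have := htrans α le_rfl
  exact (hy.2.2 w hw_seg fun z hz => trans_of (sq α) (hy.2.1 z hz) hw.1.1).2

theorem IsLubA.isLeast_seg_of_empty [LE L] (hu : IsLubA sq α x ∅ u) : IsLeast (seg sq α x) u :=
  ⟨hu.1, fun w hw => (hu.2.2 w hw (Set.forall_mem_empty.2 trivial)).2⟩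

theorem IsLubA.sq_of_isLeast_seg [PartialOrder L] (hu : IsLubA sq α x ∅ u)
    (hy : IsLeast (seg sq α x) y) (hw : w ∈ seg sq α x) : sq α y w := by
  obtain rfl : u = y := hu.isLeast_seg_of_empty.unique hy
  exact (hu.2.2 w hw (Set.forall_mem_empty.2 trivial)).1

end Stratification

theorem stmt_17_general
    {L : Type*} [PartialOrder L] {κ : Ordinal}
    (sq : Ordinal → L → L → Prop)
    (hrefl : ∀ α < κ, ∀ x : L, sq α x x)
    (htrans : ∀ α < κ, ∀ x y z : L, sq α x y → sq α y z → sq α x z)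
    (ax1 : ∀ α β : Ordinal, α < β → β < κ → ∀ x y : L, sq β x y → eqa sq α x y)
    (ax3 : ∀ x : L, ∀ α < κ, ∀ X ⊆ seg sq α x, ∃ y : L, IsLubA sq α x X y)
    {α : Ordinal} (hα : α + 1 < κ) (f : L → L)
    (hf : ∀ x y : L, sq α x y → sq α (f x) (f y))
    {x : L} (hx : sq α x (f x)) :
    ∃ y : L, sq α x y ∧ eqa sq α y (f y) ∧
      (∀ z : L, sq α x z → sq α (f z) z → sq α y z) ∧
      (∀ w ∈ segcl sq α y, y ≤ w) ∧
      (∀ w ∈ segcl sq α y, sq (α + 1) y w) ∧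
      sq (α + 1) y (f y) := by
  have hακ : α < κ := (lt_add_one α).trans hα
  have htrans_le : ∀ β ≤ α, IsTrans L (sq β) := fun β hβ => ⟨htrans β (hβ.trans_lt hακ)⟩
  have := htrans_le α le_rfl
  have mem_seg : ∀ {a b}, sq α a b → b ∈ seg sq α a := fun h β hβ => ax1 β α hβ hακ _ _ h
  obtain ⟨y, hy⟩ := ax3 x α hακ (lowerBoundsA sq α x (prefixedAbove (sq α) f x))
    (Set.sep_subset _ _)
  have hlower := (hy.mem_lowerBoundsA fun z hz => mem_seg hz.1).2
  have hxy : sq α x y := hy.2.1 x ⟨mem_seg (hrefl α hακ x), fun z hz => hz.1⟩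
  have hfix : eqa sq α y (f y) := antisymmRel_map_of_greatest_lowerBound_prefixedAbove
    hf hx hxy hlower fun w hxw hw => hy.2.1 w ⟨mem_seg hxw, hw⟩
  have hleast : ∀ w ∈ segcl sq α y, y ≤ w := fun w => hy.le_of_mem_segcl htrans_le
  have hy_mem : y ∈ segcl sq α y := ⟨⟨hrefl α hακ y, hrefl α hακ y⟩, mem_seg (hrefl α hακ y)⟩
  have hsucc : ∀ w ∈ segcl sq α y, sq (α + 1) y w := by
    obtain ⟨u, hu⟩ := ax3 y (α + 1) hα ∅ (Set.empty_subset _)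
    rw [← seg_add_one] at hy_mem hleast ⊢
    exact fun w => hu.sq_of_isLeast_seg ⟨hy_mem, hleast⟩
  exact ⟨y, hxy, hfix, fun z hxz hfz => hlower z ⟨hxz, hfz⟩, hleast, hsucc,
    hsucc (f y) ⟨hfix, mem_seg hfix.1⟩⟩

theorem stmt_17
    {L : Type*} [CompleteLattice L] {κ : Ordinal} (hκ : Order.IsSuccLimit κ)
    (sq : Ordinal → L → L → Prop)
    (hrefl : ∀ α < κ, ∀ x : L, sq α x x)
    (htrans : ∀ α < κ, ∀ x y z : L, sq α x y → sq α y z → sq α x z)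
    (ax1 : ∀ α β : Ordinal, α < β → β < κ → ∀ x y : L, sq β x y → eqa sq α x y)
    (ax2 : ∀ x y : L, (∀ α < κ, eqa sq α x y) → x = y)
    (ax3 : ∀ x : L, ∀ α < κ, ∀ X ⊆ seg sq α x, ∃ y : L, IsLubA sq α x X y)
    (ax4 : ∀ X : Set L, X.Nonempty → ∀ α < κ, ∀ y : L,
      (∀ x ∈ X, eqa sq α y x) → eqa sq α y (sSup X))
    {α : Ordinal} (hα : α < κ) (f : L → L)
    (hf : ∀ x y : L, sq α x y → sq α (f x) (f y))
    {x : L} (hx : sq α x (f x)) :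
    ∃ y : L, sq α x y ∧ eqa sq α y (f y) ∧
      (∀ z : L, sq α x z → sq α (f z) z → sq α y z) ∧
      (∀ w ∈ segcl sq α y, y ≤ w) ∧
      (∀ w ∈ segcl sq α y, sq (α + 1) y w) ∧
      sq (α + 1) y (f y) := by
  exact stmt_17_general sq hrefl htrans ax1 ax3 (hκ.add_one_lt hα) f hf hx
end
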